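/- arXiv:math/0408218 — 2 statements merged into one kernel-verified Lean document; each statement's English description precedes it below -/
import Mathlib

section
/- (Finite-dimensional Larson–Sweedler theorem, integral version.) Let A be a finite-dimensional associative unital algebra over ℂ with a comultiplication Δ such that the left leg of Δ is all of A. If there exists a faithful left integral on A, then the linear maps T₁, T₂ : A ⊗ A → A ⊗ A determined by T₁(a ⊗ b) = Δ(a)(1 ⊗ b) and T₂(a ⊗ b) = (a ⊗ 1)Δ(b) are bijective, and (A, Δ) is a Hopf algebra: there exist a linear map ε : A → ℂ and a linear map S : A → A such that (ε ⊗ id)(Δ(a)) = a, (id ⊗ ε)(Δ(a)) = a, m(S ⊗ id)(Δ(a)) = ε(a)·1 and m(id ⊗ S)(Δ(a)) = ε(a)·1 for all a ∈ A, where m denotes the multiplication map A ⊗ A → A. -/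
open TensorProduct

noncomputable section

variable {A : Type*} [Ring A] [Algebra ℂ A]

/-- The slice map `id ⊗ ω : A ⊗ A → A`. -/
def sliceR (ω : A →ₗ[ℂ] ℂ) : A ⊗[ℂ] A →ₗ[ℂ] A :=
  (TensorProduct.rid ℂ A).toLinearMap ∘ₗ TensorProduct.map LinearMap.id ω

/-- The slice map `ω ⊗ id : A ⊗ A → A`. -/
def sliceL (ω : A →ₗ[ℂ] ℂ) : A ⊗[ℂ] A →ₗ[ℂ] A :=
  (TensorProduct.lid ℂ A).toLinearMap ∘ₗ TensorProduct.map ω LinearMap.id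

/-- Coassociativity of a comultiplication `Δ : A → A ⊗ A`:
`(Δ ⊗ id) ∘ Δ = (id ⊗ Δ) ∘ Δ` (up to the associator). -/
def IsCoassoc (Δ : A →ₐ[ℂ] A ⊗[ℂ] A) : Prop :=
  ∀ a : A,
    TensorProduct.assoc ℂ A A A (TensorProduct.map Δ.toLinearMap LinearMap.id (Δ a)) =
      TensorProduct.map LinearMap.id Δ.toLinearMap (Δ a)

/-- A left integral: a nonzero functional with `(id ⊗ φ)(Δ a) = φ(a)·1` for all `a`. -/
def IsLeftIntegral (Δ : A →ₐ[ℂ] A ⊗[ℂ] A) (φ : A →ₗ[ℂ] ℂ) : Prop :=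
  φ ≠ 0 ∧ ∀ a : A, sliceR φ (Δ a) = φ a • (1 : A)

/-- A right integral: a nonzero functional with `(ψ ⊗ id)(Δ a) = ψ(a)·1` for all `a`. -/
def IsRightIntegral (Δ : A →ₐ[ℂ] A ⊗[ℂ] A) (ψ : A →ₗ[ℂ] ℂ) : Prop :=
  ψ ≠ 0 ∧ ∀ a : A, sliceL ψ (Δ a) = ψ a • (1 : A)

/-- A faithful functional: the bilinear form `(a, b) ↦ ω(ab)` is non-degenerate. -/
def IsFaithful (ω : A →ₗ[ℂ] ℂ) : Prop :=
  (∀ b : A, (∀ a : A, ω (a * b) = 0) → b = 0) ∧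
  (∀ b : A, (∀ a : A, ω (b * a) = 0) → b = 0)

/-- The left leg of an element `x ∈ A ⊗ A`: the span of `{(id ⊗ ω)(x) : ω ∈ A*}`. -/
def leftLegOf (x : A ⊗[ℂ] A) : Submodule ℂ A :=
  Submodule.span ℂ {y : A | ∃ ω : A →ₗ[ℂ] ℂ, y = sliceR ω x}

/-- The right leg of an element `x ∈ A ⊗ A`: the span of `{(ω ⊗ id)(x) : ω ∈ A*}`. -/
def rightLegOf (x : A ⊗[ℂ] A) : Submodule ℂ A :=
  Submodule.span ℂ {y : A | ∃ ω : A →ₗ[ℂ] ℂ, y = sliceL ω x}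

/-- The left leg of `Δ`: the span of `{(id ⊗ ω)(Δ a) : a ∈ A, ω ∈ A*}`. -/
def leftLeg (Δ : A →ₐ[ℂ] A ⊗[ℂ] A) : Submodule ℂ A :=
  Submodule.span ℂ {y : A | ∃ (a : A) (ω : A →ₗ[ℂ] ℂ), y = sliceR ω (Δ a)}

/-- The right leg of `Δ`: the span of `{(ω ⊗ id)(Δ a) : a ∈ A, ω ∈ A*}`. -/
def rightLeg (Δ : A →ₐ[ℂ] A ⊗[ℂ] A) : Submodule ℂ A :=
  Submodule.span ℂ {y : A | ∃ (a : A) (ω : A →ₗ[ℂ] ℂ), y = sliceL ω (Δ a)}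

/-- A comultiplication is full if both of its legs are all of `A`. -/
def IsFull (Δ : A →ₐ[ℂ] A ⊗[ℂ] A) : Prop :=
  leftLeg Δ = ⊤ ∧ rightLeg Δ = ⊤

/-- The linear map `T₁` with `T₁ (a ⊗ b) = Δ(a) * (1 ⊗ b)`. -/
def T1 (Δ : A →ₐ[ℂ] A ⊗[ℂ] A) : A ⊗[ℂ] A →ₗ[ℂ] A ⊗[ℂ] A :=
  LinearMap.mul' ℂ (A ⊗[ℂ] A) ∘ₗ
    TensorProduct.map Δ.toLinearMap (TensorProduct.mk ℂ A A 1)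

/-- The linear map `T₁'` with `T₁' (a ⊗ b) = Δ(a) * (b ⊗ 1)`. -/
def T1' (Δ : A →ₐ[ℂ] A ⊗[ℂ] A) : A ⊗[ℂ] A →ₗ[ℂ] A ⊗[ℂ] A :=
  LinearMap.mul' ℂ (A ⊗[ℂ] A) ∘ₗ
    TensorProduct.map Δ.toLinearMap ((TensorProduct.mk ℂ A A).flip 1)

/-- The linear map `T₂` with `T₂ (a ⊗ b) = (a ⊗ 1) * Δ(b)`. -/
def T2 (Δ : A →ₐ[ℂ] A ⊗[ℂ] A) : A ⊗[ℂ] A →ₗ[ℂ] A ⊗[ℂ] A :=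
  LinearMap.mul' ℂ (A ⊗[ℂ] A) ∘ₗ
    TensorProduct.map ((TensorProduct.mk ℂ A A).flip 1) Δ.toLinearMap

/-- The linear map `T₂'` with `T₂' (a ⊗ b) = (1 ⊗ a) * Δ(b)`. -/
def T2' (Δ : A →ₐ[ℂ] A ⊗[ℂ] A) : A ⊗[ℂ] A →ₗ[ℂ] A ⊗[ℂ] A :=
  LinearMap.mul' ℂ (A ⊗[ℂ] A) ∘ₗ
    TensorProduct.map (TensorProduct.mk ℂ A A 1) Δ.toLinearMap

/-- A left cointegral: a nonzero element `h` with `Δ(a)(1 ⊗ h) = a ⊗ h` for all `a`. -/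
def IsLeftCointegral (Δ : A →ₐ[ℂ] A ⊗[ℂ] A) (h : A) : Prop :=
  h ≠ 0 ∧ ∀ a : A, Δ a * ((1 : A) ⊗ₜ[ℂ] h) = a ⊗ₜ[ℂ] h

/-- A right cointegral: a nonzero element `k` with `(k ⊗ 1)Δ(a) = k ⊗ a` for all `a`. -/
def IsRightCointegral (Δ : A →ₐ[ℂ] A ⊗[ℂ] A) (k : A) : Prop :=
  k ≠ 0 ∧ ∀ a : A, (k ⊗ₜ[ℂ] (1 : A)) * Δ a = k ⊗ₜ[ℂ] a

/-- `Δ₁₃(a) = (1 ⊗ σ)(Δ(a) ⊗ 1)`, viewed in `A ⊗ (A ⊗ A)`. -/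
def delta13 (Δ : A →ₐ[ℂ] A ⊗[ℂ] A) (a : A) : A ⊗[ℂ] (A ⊗[ℂ] A) :=
  TensorProduct.map LinearMap.id (TensorProduct.comm ℂ A A).toLinearMap
    (TensorProduct.assoc ℂ A A A (Δ a ⊗ₜ[ℂ] (1 : A)))

/-!
The map `T₂ (a ⊗ b) = (a ⊗ 1) Δ(b)` is left `A`-linear, and left `A`-linear maps `A ⊗ A → A` are
linear maps `A → A`; under this identification precomposition with `T₂` is the left convolution
`f ↦ id * f`. For a left integral `φ`, slicing `T₂(y) Δ(c)` by `φ` gives the slice of `y` by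
`φ(· c)`. If `φ` is faithful these functionals exhaust the dual, so `T₂` is injective, hence
bijective, and `f ↦ id * f` is bijective. The solution of `id * E = id` is a multiple `ε(·) 1` of
the identity because the left leg is everything, and `ε` is the counit. The identity is now a
convolution unit, whose inverse is the antipode; and `T₁` is invertible because it is the action of
the identity on `A ⊗ A` under `f ↦ (a ⊗ b ↦ a₁ ⊗ f(a₂) b)`.
-/

section LeftExtend

variable {R H M N P : Type*} [CommSemiring R] [Semiring H] [Algebra R H]
  [AddCommMonoid M] [Module R M] [AddCommMonoid N] [Module R N] [Module H N] [IsScalarTower R H N]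
  [AddCommMonoid P] [Module R P] [Module H P] [IsScalarTower R H P]

/-- The `H`-linear extension `h ⊗ m ↦ h • f m` of an `R`-linear map `f`.
Unlike `LinearMap.liftBaseChange`, it allows `H` to be noncommutative. -/
def leftExtend (f : M →ₗ[R] N) : H ⊗[R] M →ₗ[H] N :=
  AlgebraTensorModule.lift (LinearMap.toSpanSingleton H (M →ₗ[R] N) f)

@[simp]
theorem leftExtend_tmul (f : M →ₗ[R] N) (h : H) (m : M) :
    leftExtend f (h ⊗ₜ[R] m) = h • f m := rfl

theorem comp_leftExtend (g : N →ₗ[H] P) (f : M →ₗ[R] N) :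
    g ∘ₗ leftExtend f = leftExtend (g.restrictScalars R ∘ₗ f) := by
  ext m
  simp

theorem eq_leftExtend (g : H ⊗[R] M →ₗ[H] N) :
    g = leftExtend (g.restrictScalars R ∘ₗ TensorProduct.mk R H M 1) := by
  ext m
  simp

theorem leftExtend_injective :
    Function.Injective (leftExtend : (M →ₗ[R] N) → H ⊗[R] M →ₗ[H] N) := fun f g hfg ↦ by
  ext m
  simpa using LinearMap.congr_fun hfg ((1 : H) ⊗ₜ[R] m)

end LeftExtend

section HitAction

variable {R C : Type*} [CommSemiring R] [AddCommMonoid C] [Module R C] (Δ : C →ₗ[R] C ⊗[R] C)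

/-- The left hit action `ω ⇀ a = a₁ ω(a₂)` of a functional `ω` on `a`. -/
def leftHit (ω : C →ₗ[R] R) : C →ₗ[R] C :=
  (TensorProduct.rid R C).toLinearMap ∘ₗ ω.lTensor C ∘ₗ Δ

theorem comul_comp_leftHit
    (hΔ : TensorProduct.assoc R C C C ∘ₗ Δ.rTensor C ∘ₗ Δ = Δ.lTensor C ∘ₗ Δ)
    (ω : C →ₗ[R] R) : Δ ∘ₗ leftHit Δ ω = (leftHit Δ ω).lTensor C ∘ₗ Δ := by
  have slice_comul : Δ ∘ₗ (TensorProduct.rid R C).toLinearMap ∘ₗ ω.lTensor C =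
      ((TensorProduct.rid R C).toLinearMap ∘ₗ ω.lTensor C).lTensor C ∘ₗ
        (TensorProduct.assoc R C C C).toLinearMap ∘ₗ Δ.rTensor C := by
    ext a b
    have slice_assoc (x : C ⊗[R] C) : ω b • x =
        ((TensorProduct.rid R C).toLinearMap ∘ₗ ω.lTensor C).lTensor C
          (TensorProduct.assoc R C C C (x ⊗ₜ b)) := by
      induction x with
      | zero => simp
      | tmul p q => simp
      | add x y hx hy => simp only [smul_add, hx, hy, TensorProduct.add_tmul, map_add]
    simpa using slice_assoc (Δ a)
  calc Δ ∘ₗ leftHit Δ ω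
      = (Δ ∘ₗ (TensorProduct.rid R C).toLinearMap ∘ₗ ω.lTensor C) ∘ₗ Δ := rfl
    _ = ((TensorProduct.rid R C).toLinearMap ∘ₗ ω.lTensor C).lTensor C ∘ₗ
          TensorProduct.assoc R C C C ∘ₗ Δ.rTensor C ∘ₗ Δ := by rw [slice_comul]; rfl
    _ = (leftHit Δ ω).lTensor C ∘ₗ Δ := by
      rw [hΔ, ← LinearMap.comp_assoc, ← LinearMap.lTensor_comp]; rfl

theorem lid_comp_rTensor_comp_comul {R C : Type*} [CommRing R] [AddCommGroup C] [Module R C]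
    [Module.Projective R C] {Δ : C →ₗ[R] C ⊗[R] C} {ε : C →ₗ[R] R}
    (hε : ∀ ω, ε ∘ₗ leftHit Δ ω = ω) :
    (TensorProduct.lid R C).toLinearMap ∘ₗ ε.rTensor C ∘ₗ Δ = LinearMap.id := by
  ext a
  rw [← sub_eq_zero, ← Module.forall_dual_apply_eq_zero_iff R]
  intro ω
  have slice_comm : ω ∘ₗ (TensorProduct.lid R C).toLinearMap ∘ₗ ε.rTensor C =
      ε ∘ₗ (TensorProduct.rid R C).toLinearMap ∘ₗ ω.lTensor C := by
    ext x y
    simp [mul_comm]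
  rw [map_sub, sub_eq_zero]
  exact (LinearMap.congr_fun slice_comm (Δ a)).trans (LinearMap.congr_fun (hε ω) a)

end HitAction

section Comultiplication

variable {R H : Type*} [CommSemiring R] [Semiring H] [Algebra R H] (Δ : H →ₗ[R] H ⊗[R] H)

/-- The left Galois map `a ⊗ b ↦ (a ⊗ 1) Δ(b)`, as a map of left `H`-modules. -/
def leftGalois : H ⊗[R] H →ₗ[H] H ⊗[R] H := leftExtend Δ

/-- The right Galois map `a ⊗ b ↦ Δ(a) (1 ⊗ b)`. -/
def rightGalois : H ⊗[R] H →ₗ[R] H ⊗[R] H :=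
  LinearMap.mul' R (H ⊗[R] H) ∘ₗ TensorProduct.map Δ (TensorProduct.mk R H H 1)

/-- The convolution `a ↦ a₁ f(a₂)` of the identity with `f`. -/
def idConv (f : H →ₗ[R] H) : H →ₗ[R] H := LinearMap.mul' R H ∘ₗ f.lTensor H ∘ₗ Δ

theorem idConv_comp_leftHit
    (hΔ : TensorProduct.assoc R H H H ∘ₗ Δ.rTensor H ∘ₗ Δ = Δ.lTensor H ∘ₗ Δ)
    (f : H →ₗ[R] H) (ω : H →ₗ[R] R) :
    idConv Δ (f ∘ₗ leftHit Δ ω) = idConv Δ f ∘ₗ leftHit Δ ω := by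
  simp only [idConv, LinearMap.comp_assoc, comul_comp_leftHit Δ hΔ, LinearMap.lTensor_comp]

theorem idConv_linearMap_comp (ω : H →ₗ[R] R) :
    idConv Δ (Algebra.linearMap R H ∘ₗ ω) = leftHit Δ ω := by
  have : LinearMap.mul' R H ∘ₗ (Algebra.linearMap R H ∘ₗ ω).lTensor H =
      (TensorProduct.rid R H).toLinearMap ∘ₗ ω.lTensor H := by
    ext a b
    simp [Algebra.smul_def, Algebra.commutes]
  rw [idConv, leftHit, ← LinearMap.comp_assoc, this, LinearMap.comp_assoc]

theorem leftExtend_comp_leftGalois (f : H →ₗ[R] H) :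
    leftExtend f ∘ₗ leftGalois Δ = leftExtend (idConv Δ f) := by
  have : (leftExtend f : H ⊗[R] H →ₗ[H] H).restrictScalars R =
      LinearMap.mul' R H ∘ₗ f.lTensor H := by
    ext a b
    simp
  rw [leftGalois, comp_leftExtend, this, idConv, LinearMap.comp_assoc]

theorem idConv_bijective (hbij : Function.Bijective (leftGalois Δ)) :
    Function.Bijective (idConv Δ) := by
  let e : H ⊗[R] H ≃ₗ[H] H ⊗[R] H := LinearEquiv.ofBijective (leftGalois Δ) hbij
  refine ⟨fun f g hfg ↦ leftExtend_injective (H := H) ?_, fun g ↦ ?_⟩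
  · rw [← LinearMap.cancel_right hbij.2, leftExtend_comp_leftGalois, leftExtend_comp_leftGalois,
      hfg]
  · let f : H →ₗ[R] H :=
      (leftExtend g ∘ₗ e.symm.toLinearMap).restrictScalars R ∘ₗ TensorProduct.mk R H H 1
    refine ⟨f, leftExtend_injective (H := H) ?_⟩
    rw [← leftExtend_comp_leftGalois, ← eq_leftExtend]
    ext b
    exact congrArg (leftExtend g) (e.symm_apply_apply (1 ⊗ₜ b))

end Comultiplication

section Counit

variable {K H : Type*} [Field K] [Ring H] [Algebra K H]

-- The solution `E` of `id * E = id` satisfies `id * (E ∘ (ω ⇀ ·)) = ω ⇀ · = id * ω(·)1`,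
-- so `E (ω ⇀ a) = ω(a) 1`; since the elements `ω ⇀ a` span `H`, `E` is scalar-valued.
theorem exists_counit (Δ : H →ₗ[K] H ⊗[K] H)
    (hΔ : TensorProduct.assoc K H H H ∘ₗ Δ.rTensor H ∘ₗ Δ = Δ.lTensor H ∘ₗ Δ)
    (hleg : Submodule.span K {x : H | ∃ (a : H) (ω : H →ₗ[K] K), x = leftHit Δ ω a} = ⊤)
    (hbij : Function.Bijective (leftGalois Δ)) :
    ∃ ε : H →ₗ[K] K, leftHit Δ ε = LinearMap.id ∧ ∀ ω, ε ∘ₗ leftHit Δ ω = ω := by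
  obtain _ | _ := subsingleton_or_nontrivial H
  · exact ⟨0, Subsingleton.elim _ _, fun _ ↦ Subsingleton.elim _ _⟩
  have hconv := idConv_bijective Δ hbij
  obtain ⟨E, hE⟩ := hconv.2 LinearMap.id
  have E_leftHit (ω : H →ₗ[K] K) : E ∘ₗ leftHit Δ ω = Algebra.linearMap K H ∘ₗ ω := hconv.1 <| by
    rw [idConv_comp_leftHit Δ hΔ, hE, LinearMap.id_comp, idConv_linearMap_comp]
  obtain ⟨f, hf⟩ : ∃ f : H →ₗ[K] K, f ∘ₗ Algebra.linearMap K H = LinearMap.id := by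
    obtain ⟨f, hf⟩ := Module.Projective.exists_dual_eq_one K (one_ne_zero (α := H))
    exact ⟨f, LinearMap.ext_ring (by simpa using hf)⟩
  have counit_leftHit (ω : H →ₗ[K] K) : (f ∘ₗ E) ∘ₗ leftHit Δ ω = ω := by
    rw [LinearMap.comp_assoc, E_leftHit, ← LinearMap.comp_assoc, hf, LinearMap.id_comp]
  have E_eq : E = Algebra.linearMap K H ∘ₗ f ∘ₗ E := LinearMap.ext_on hleg <| by
    rintro _ ⟨a, ω, rfl⟩
    calc E (leftHit Δ ω a) = algebraMap K H (ω a) := LinearMap.congr_fun (E_leftHit ω) a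
      _ = algebraMap K H (f (E (leftHit Δ ω a))) :=
        congrArg _ (LinearMap.congr_fun (counit_leftHit ω) a).symm
  refine ⟨f ∘ₗ E, ?_, counit_leftHit⟩
  rw [← idConv_linearMap_comp, ← E_eq, hE]

end Counit

section Convolution

open WithConv Coalgebra

variable {R C B : Type*} [CommSemiring R] [AddCommMonoid C] [Module R C] [Coalgebra R C]
  [Semiring B] [Algebra R B]

/-- The action `c ⊗ a ↦ c₁ ⊗ f(c₂) a` of the convolution algebra of maps `C → B` on `C ⊗ B`. -/
def convAction (f : WithConv (C →ₗ[R] B)) : Module.End R (C ⊗[R] B) :=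
  (LinearMap.mul' R B ∘ₗ f.ofConv.rTensor B).lTensor C ∘ₗ
    (TensorProduct.assoc R C C B).toLinearMap ∘ₗ (comul (R := R) (A := C)).rTensor B

theorem convAction_tmul (f : WithConv (C →ₗ[R] B)) {ι : Type*} {c : C} (𝓡 : Repr R c ι) (a : B) :
    convAction f (c ⊗ₜ a) = ∑ i ∈ 𝓡.index, 𝓡.left i ⊗ₜ[R] (f (𝓡.right i) * a) := by
  simp [convAction, ← 𝓡.eq, TensorProduct.sum_tmul]

theorem convAction_one : convAction (1 : WithConv (C →ₗ[R] B)) = 1 := by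
  ext c a
  calc convAction 1 (c ⊗ₜ a)
      = (LinearMap.toSpanSingleton R B a).lTensor C
          (∑ i ∈ (ℛ R c).index, (ℛ R c).left i ⊗ₜ[R] counit (R := R) ((ℛ R c).right i)) := by
        simp [convAction_tmul _ (ℛ R c), Algebra.smul_def, -sum_tmul_counit_eq]
    _ = c ⊗ₜ a := by simp

theorem convAction_mul (f g : WithConv (C →ₗ[R] B)) :
    convAction (f * g) = convAction f * convAction g := by
  ext c a
  let mulMap : C ⊗[R] C →ₗ[R] B :=
    LinearMap.mulRight R a ∘ₗ LinearMap.mul' R B ∘ₗ TensorProduct.map f.ofConv g.ofConv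
  have coassoc := congrArg (mulMap.lTensor C)
    (sum_tmul_tmul_eq (ℛ R c) (fun i ↦ ℛ R ((ℛ R c).left i)) (fun i ↦ ℛ R ((ℛ R c).right i)))
  simpa [mulMap, convAction_tmul _ (ℛ R _), (ℛ R _).convMul_apply, Finset.sum_mul,
    TensorProduct.tmul_sum, mul_assoc] using coassoc.symm

theorem convAction_id [Coalgebra R B] :
    convAction (toConv (LinearMap.id : B →ₗ[R] B)) = rightGalois comul := by
  ext a b
  simp [convAction_tmul _ (ℛ R a), rightGalois, ← (ℛ R a).eq, Finset.sum_mul]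

theorem rightGalois_comul_bijective [Coalgebra R B]
    (hid : IsUnit (toConv (LinearMap.id : B →ₗ[R] B))) :
    Function.Bijective (rightGalois (comul (R := R) (A := B))) := by
  rw [← Module.End.isUnit_iff, ← convAction_id]
  exact hid.map (⟨⟨convAction, convAction_one⟩, convAction_mul⟩ :
    WithConv (B →ₗ[R] B) →* Module.End R (B ⊗[R] B))

theorem isUnit_toConv_id [Coalgebra R B]
    (hbij : Function.Bijective (leftGalois (comul (R := R) (A := B)))) :
    IsUnit (toConv (LinearMap.id : B →ₗ[R] B)) := by
  have : (toConv (LinearMap.id : B →ₗ[R] B) * ·) = toConv ∘ idConv comul ∘ ofConv := rfl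
  rw [IsUnit.isUnit_iff_mulLeft_bijective, this]
  exact toConv_bijective.comp ((idConv_bijective comul hbij).comp ofConv_bijective)

end Convolution

section Integral

theorem rid_lTensor_leftGalois_mul_comul {R H : Type*} [CommSemiring R] [Semiring H] [Algebra R H]
    (Δ : H →ₐ[R] H ⊗[R] H) {φ : H →ₗ[R] R} (hφ : ∀ a, leftHit Δ.toLinearMap φ a = φ a • (1 : H))
    (y : H ⊗[R] H) (c : H) :
    TensorProduct.rid R H (φ.lTensor H (leftGalois Δ.toLinearMap y * Δ c)) =
      TensorProduct.rid R H ((φ ∘ₗ LinearMap.mulRight R c).lTensor H y) := by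
  have slice_smul (a : H) (z : H ⊗[R] H) : TensorProduct.rid R H (φ.lTensor H (a • z)) =
      a * TensorProduct.rid R H (φ.lTensor H z) := by
    induction z with
    | zero => simp
    | tmul p q => simp [smul_tmul']
    | add z w hz hw => simp only [smul_add, map_add, mul_add, hz, hw]
  induction y with
  | zero => simp
  | add x y hx hy => simp only [map_add, add_mul, hx, hy]
  | tmul a b =>
    calc TensorProduct.rid R H (φ.lTensor H (leftGalois Δ.toLinearMap (a ⊗ₜ b) * Δ c))
        = TensorProduct.rid R H (φ.lTensor H (a • Δ (b * c))) := by
          rw [leftGalois, leftExtend_tmul, smul_mul_assoc, AlgHom.toLinearMap_apply, ← map_mul]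
      _ = a * leftHit Δ.toLinearMap φ (b * c) := slice_smul a _
      _ = TensorProduct.rid R H ((φ ∘ₗ LinearMap.mulRight R c).lTensor H (a ⊗ₜ b)) := by
          simp [hφ]

theorem eq_zero_of_forall_rid_lTensor_eq_zero {R V W : Type*} [CommSemiring R] [AddCommMonoid V]
    [Module R V] [AddCommMonoid W] [Module R W] [Module.Free R W] {y : V ⊗[R] W}
    (hy : ∀ ω : W →ₗ[R] R, TensorProduct.rid R V (ω.lTensor V y) = 0) : y = 0 := by
  let b := Module.Free.chooseBasis R W
  apply (TensorProduct.equivFinsuppOfBasisRight b).injective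
  ext i
  rw [TensorProduct.equivFinsuppOfBasisRight_apply]
  simpa using hy (b.coord i)

variable {K H : Type*} [Field K] [Ring H] [Algebra K H]

theorem exists_mulRight_comp_eq [FiniteDimensional K H] {φ : H →ₗ[K] K}
    (hφ : ∀ b, (∀ a, φ (a * b) = 0) → b = 0) (ω : H →ₗ[K] K) :
    ∃ c, φ ∘ₗ LinearMap.mulRight K c = ω := by
  let B : H →ₗ[K] Module.Dual K H := ((LinearMap.mul K H).compr₂ φ).flip
  have B_injective : Function.Injective B := (injective_iff_map_eq_zero B).mpr fun b hb ↦
    hφ b (LinearMap.congr_fun hb)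
  exact (LinearMap.injective_iff_surjective_of_finrank_eq_finrank
    Subspace.dual_finrank_eq.symm).mp B_injective ω

theorem leftGalois_bijective [FiniteDimensional K H] (Δ : H →ₐ[K] H ⊗[K] H) {φ : H →ₗ[K] K}
    (hφ : ∀ a, leftHit Δ.toLinearMap φ a = φ a • (1 : H))
    (hφf : ∀ b, (∀ a, φ (a * b) = 0) → b = 0) :
    Function.Bijective (leftGalois Δ.toLinearMap) := by
  have injective : Function.Injective (leftGalois Δ.toLinearMap) := by
    refine (injective_iff_map_eq_zero _).mpr fun y hy ↦
      eq_zero_of_forall_rid_lTensor_eq_zero (R := K) fun ω ↦ ?_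
    obtain ⟨c, rfl⟩ := exists_mulRight_comp_eq hφf ω
    simpa [hy] using (rid_lTensor_leftGalois_mul_comul Δ hφ y c).symm
  exact ⟨injective, LinearMap.injective_iff_surjective
    (f := (leftGalois Δ.toLinearMap).restrictScalars K) |>.mp injective⟩

end Integral

theorem T2_eq_leftGalois (Δ : A →ₐ[ℂ] A ⊗[ℂ] A) :
    T2 Δ = (leftGalois Δ.toLinearMap).restrictScalars ℂ := TensorProduct.ext' fun a b ↦ by
  calc (a ⊗ₜ[ℂ] (1 : A)) * Δ b
      = a • (1 : A ⊗[ℂ] A) * Δ b := by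
        rw [Algebra.TensorProduct.one_def, smul_tmul', smul_eq_mul, mul_one]
    _ = a • Δ b := smul_one_mul a (Δ b)

theorem larson_sweedler_finite_dimensional_integral_general {K H : Type*} [Field K] [Ring H]
    [Algebra K H] [FiniteDimensional K H] (Δ : H →ₐ[K] H ⊗[K] H)
    (hΔ : TensorProduct.assoc K H H H ∘ₗ Δ.toLinearMap.rTensor H ∘ₗ Δ.toLinearMap =
      Δ.toLinearMap.lTensor H ∘ₗ Δ.toLinearMap)
    (hleg : Submodule.span K
      {x : H | ∃ (a : H) (ω : H →ₗ[K] K), x = leftHit Δ.toLinearMap ω a} = ⊤)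
    (φ : H →ₗ[K] K) (hint : ∀ a, leftHit Δ.toLinearMap φ a = φ a • (1 : H))
    (hsep : ∀ b, (∀ a, φ (a * b) = 0) → b = 0) :
    (Function.Bijective (rightGalois Δ.toLinearMap) ∧
      Function.Bijective (leftGalois Δ.toLinearMap)) ∧
    ∃ (ε : H →ₗ[K] K) (S : H →ₗ[K] H), ∀ a : H,
      TensorProduct.lid K H (ε.rTensor H (Δ a)) = a ∧ leftHit Δ.toLinearMap ε a = a ∧
      LinearMap.mul' K H (TensorProduct.map S LinearMap.id (Δ a)) = ε a • (1 : H) ∧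
      LinearMap.mul' K H (TensorProduct.map LinearMap.id S (Δ a)) = ε a • (1 : H) := by
  have hT₂ := leftGalois_bijective Δ hint hsep
  obtain ⟨ε, hright, hε⟩ := exists_counit Δ.toLinearMap hΔ hleg hT₂
  have hleft := lid_comp_rTensor_comp_comul hε
  let _ : Coalgebra K H :=
    { comul := Δ.toLinearMap
      counit := ε
      coassoc := hΔ
      rTensor_counit_comp_comul := by
        ext a
        exact (TensorProduct.lid K H).injective (by simpa using LinearMap.congr_fun hleft a)
      lTensor_counit_comp_comul := by
        ext a
        exact (TensorProduct.rid K H).injective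
          (by simpa [leftHit] using LinearMap.congr_fun hright a) }
  have hid := isUnit_toConv_id hT₂
  obtain ⟨S, hidS, hSid⟩ := isUnit_iff_exists.mp hid
  refine ⟨⟨rightGalois_comul_bijective hid, hT₂⟩, ε, S.ofConv, fun a ↦
    ⟨LinearMap.congr_fun hleft a, LinearMap.congr_fun hright a, ?_, ?_⟩⟩
  · rw [← Algebra.algebraMap_eq_smul_one]
    exact LinearMap.congr_fun (congrArg WithConv.ofConv hSid) a
  · rw [← Algebra.algebraMap_eq_smul_one]
    exact LinearMap.congr_fun (congrArg WithConv.ofConv hidS) a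

/-- Finite-dimensional Larson-Sweedler theorem (integral version): if `A` is
finite-dimensional, the left leg of `Δ` is all of `A` and there is a faithful left integral,
then `T₁` and `T₂` are bijective and `(A, Δ)` is a Hopf algebra. -/
theorem larson_sweedler_finite_dimensional_integral
    [FiniteDimensional ℂ A]
    (Δ : A →ₐ[ℂ] A ⊗[ℂ] A) (hΔ : IsCoassoc Δ) (hleg : leftLeg Δ = ⊤)
    (φ : A →ₗ[ℂ] ℂ) (hφ : IsLeftIntegral Δ φ) (hφf : IsFaithful φ) :
    (Function.Bijective (T1 Δ) ∧ Function.Bijective (T2 Δ)) ∧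
    ∃ (ε : A →ₗ[ℂ] ℂ) (S : A →ₗ[ℂ] A), ∀ a : A,
      sliceL ε (Δ a) = a ∧ sliceR ε (Δ a) = a ∧
      LinearMap.mul' ℂ A (TensorProduct.map S LinearMap.id (Δ a)) = ε a • (1 : A) ∧
      LinearMap.mul' ℂ A (TensorProduct.map LinearMap.id S (Δ a)) = ε a • (1 : A) := by
  rw [T2_eq_leftGalois]
  exact larson_sweedler_finite_dimensional_integral_general Δ (LinearMap.ext hΔ) hleg φ hφ.2 hφf.1
end
end

section
/- Let A be an associative unital algebra over ℂ with a full comultiplication Δ, and assume there exist a faithful left integral φ and a faithful right integral on A. Then there exists a unique linear map ε : A → ℂ such that ε((id ⊗ φ)(Δ(a)(1 ⊗ b))) = φ(ab) for all a, b ∈ A (this determines ε on all of A since A is spanned by elements of the form (id ⊗ φ)(Δ(a)(1 ⊗ b))). Moreover ε is an algebra homomorphism, it satisfies (ε ⊗ id)(Δ(a)) = a and (id ⊗ ε)(Δ(a)) = a for all a ∈ A, and any linear functional ω : A → ℂ satisfying (ε ⊗ id)(Δ(a)) = a for all a, or satisfying (id ⊗ ω)(Δ(a)) = a for all a, must equal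 ε. -/
open TensorProduct

noncomputable section

variable {A : Type*} [Ring A] [Algebra ℂ A]

/-!
Write `T(a ⊗ b) = Δ(a)(1 ⊗ b)` for the Galois map and `W(a ⊗ b) = Σ φ(a₂b₂) a₁ ⊗ b₁`. Left
invariance of `φ` gives `T(W x) = (id ⊗ φ)(T x) ⊗ 1`, and multiplying the legs of `W x` gives
`φ(m x)·1`, where `m` is the product. Right invariance and faithfulness of `ψ` make `T` injective.
So `(id ⊗ φ)(T x) = 0` forces `W x = 0` and then `φ(m x) = 0`, which is what is needed for
`ε((id ⊗ φ)(T x)) = φ(m x)` to define a functional.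

Faithfulness of `φ` turns this equation into `(ε ⊗ id)Δ = id`. The same argument for the opposite
algebra with flipped comultiplication, where `φ` and `ψ` exchange roles, yields a functional `ε'`
with `(id ⊗ ε')Δ = id`. Any left counit equals any right counit, so `ε = ε'` and all uniqueness
claims follow. The counit shows that the elements `(id ⊗ φ)(T x)` exhaust the algebra, so `T` is
surjective. Hence `(ε ⊗ id)(Δ(a)z) = a (ε ⊗ id)(z)`, which is clear for `z` in the range of `T`,
holds for all `z`; for `z = b ⊗ 1` this is the multiplicativity of `ε`.
-/

open MulOpposite

section Slice

variable {R M N : Type*} [CommSemiring R] [AddCommMonoid M] [Module R M] [AddCommMonoid N]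
  [Module R N]

/-- The slice map `id ⊗ ω : M ⊗ N → M`; over `ℂ` it is `sliceR`. -/
def rightSlice (ω : N →ₗ[R] R) : M ⊗[R] N →ₗ[R] M :=
  (TensorProduct.rid R M).toLinearMap ∘ₗ ω.lTensor M

/-- The slice map `ω ⊗ id : M ⊗ N → N`; over `ℂ` it is `sliceL`. -/
def leftSlice (ω : M →ₗ[R] R) : M ⊗[R] N →ₗ[R] N :=
  (TensorProduct.lid R N).toLinearMap ∘ₗ ω.rTensor N

@[simp]
theorem rightSlice_tmul (ω : N →ₗ[R] R) (m : M) (n : N) :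
    rightSlice ω (m ⊗ₜ[R] n) = ω n • m := by
  simp [rightSlice]

@[simp]
theorem leftSlice_tmul (ω : M →ₗ[R] R) (m : M) (n : N) :
    leftSlice ω (m ⊗ₜ[R] n) = ω m • n := by
  simp [leftSlice]

theorem apply_rightSlice (ω : N →ₗ[R] R) (ρ : M →ₗ[R] R) (x : M ⊗[R] N) :
    ρ (rightSlice ω x) = ω (leftSlice ρ x) := by
  induction x with
  | zero => simp only [map_zero]
  | add x y hx hy => simp only [map_add, hx, hy]
  | tmul m n => simp [mul_comm]

theorem eq_zero_of_forall_leftSlice_eq_zero [Module.Free R N] {ι : Type*} {f : ι → M →ₗ[R] R}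
    (hf : ∀ m, (∀ i, f i m = 0) → m = 0) {x : M ⊗[R] N} (hx : ∀ i, leftSlice (f i) x = 0) :
    x = 0 := by
  let b := Module.Free.chooseBasis R N
  have coord_eq (k) (y : M ⊗[R] N) :
      TensorProduct.equivFinsuppOfBasisRight b y k = rightSlice (b.coord k) y := by
    induction y with
    | zero => simp
    | add y z hy hz => simp [hy, hz]
    | tmul m n => simp
  apply (TensorProduct.equivFinsuppOfBasisRight (M := M) b).injective
  ext k
  rw [map_zero, Finsupp.zero_apply, coord_eq]
  refine hf _ fun i => ?_
  rw [apply_rightSlice, hx, map_zero]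

end Slice

section SliceMul

variable {R S T : Type*} [CommSemiring R] [Semiring S] [Algebra R S] [Semiring T] [Algebra R T]

theorem leftSlice_mul_one_tmul (ω : S →ₗ[R] R) (x : S ⊗[R] T) (t : T) :
    leftSlice ω (x * (1 ⊗ₜ[R] t)) = leftSlice ω x * t := by
  induction x with
  | zero => simp
  | add x y hx hy => simp only [add_mul, map_add, hx, hy]
  | tmul s t' => simp

theorem leftSlice_mul_tmul_one (ω : S →ₗ[R] R) (x : S ⊗[R] T) (s : S) :
    leftSlice ω (x * (s ⊗ₜ[R] 1)) = leftSlice (ω ∘ₗ LinearMap.mulRight R s) x := by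
  induction x with
  | zero => simp
  | add x y hx hy => simp only [add_mul, map_add, hx, hy]
  | tmul s' t => simp

theorem rightSlice_tmul_mul (ω : T →ₗ[R] R) (s : S) (t : T) (x : S ⊗[R] T) :
    rightSlice ω ((s ⊗ₜ[R] t) * x) = s * rightSlice ω ((1 ⊗ₜ[R] t) * x) := by
  induction x with
  | zero => simp
  | add x y hx hy => simp only [mul_add, map_add, hx, hy]
  | tmul s' t' => simp

theorem rightSlice_mul'_tensorTensorTensorComm_tmul (ω : T →ₗ[R] R) (s : S) (t : T)
    (x : S ⊗[R] T) :
    rightSlice (ω ∘ₗ LinearMap.mul' R T)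
      (TensorProduct.tensorTensorTensorComm R S T S T ((s ⊗ₜ[R] t) ⊗ₜ[R] x)) =
    s ⊗ₜ[R] rightSlice ω ((1 ⊗ₜ[R] t) * x) := by
  induction x with
  | zero => simp
  | add x y hx hy => simp only [TensorProduct.tmul_add, mul_add, map_add, hx, hy]
  | tmul s' t' => simp

theorem mul'_rightSlice_mul'_tensorTensorTensorComm (ω : T →ₗ[R] R) (x y : S ⊗[R] T) :
    LinearMap.mul' R S (rightSlice (ω ∘ₗ LinearMap.mul' R T)
      (TensorProduct.tensorTensorTensorComm R S T S T (x ⊗ₜ[R] y))) = rightSlice ω (x * y) := by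
  induction x with
  | zero => simp
  | add x x' hx hx' => simp only [TensorProduct.add_tmul, add_mul, map_add, hx, hx']
  | tmul s t =>
    rw [rightSlice_mul'_tensorTensorTensorComm_tmul, LinearMap.mul'_apply, ← rightSlice_tmul_mul]

theorem lTensor_rightSlice_mulRight_assoc_tmul (ω : T →ₗ[R] R) (u : S ⊗[R] S) (t : T)
    (y : S ⊗[R] T) :
    (rightSlice ω ∘ₗ LinearMap.mulRight R y).lTensor S (TensorProduct.assoc R S S T (u ⊗ₜ[R] t)) =
      u * (1 ⊗ₜ[R] rightSlice ω ((1 ⊗ₜ[R] t) * y)) := by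
  induction u with
  | zero => simp
  | add u v hu hv => simp only [add_mul, TensorProduct.add_tmul, map_add, hu, hv]
  | tmul s s' => simp [rightSlice_tmul_mul ω s' t y]

end SliceMul

section Comultiplication

variable {R H : Type*} [CommSemiring R] [Semiring H] [Algebra R H]

/-- Coassociativity `(Δ ⊗ id) ∘ Δ = (id ⊗ Δ) ∘ Δ`, up to the associator; over `ℂ` it is
`IsCoassoc`. -/
def Coassociative (Δ : H →ₐ[R] H ⊗[R] H) : Prop :=
  ∀ a, TensorProduct.assoc R H H H (Δ.toLinearMap.rTensor H (Δ a)) =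
    Δ.toLinearMap.lTensor H (Δ a)

/-- Left invariance `(id ⊗ φ)(Δ a) = φ(a)·1`, the defining property of a left integral. -/
def LeftInvariant (Δ : H →ₐ[R] H ⊗[R] H) (φ : H →ₗ[R] R) : Prop :=
  ∀ a, rightSlice φ (Δ a) = φ a • 1

/-- Right invariance `(ψ ⊗ id)(Δ a) = ψ(a)·1`, the defining property of a right integral. -/
def RightInvariant (Δ : H →ₐ[R] H ⊗[R] H) (ψ : H →ₗ[R] R) : Prop :=
  ∀ a, leftSlice ψ (Δ a) = ψ a • 1

/-- The Galois map `a ⊗ b ↦ Δ(a)(1 ⊗ b)`; over `ℂ` it is `T1`. -/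
def galoisMap (Δ : H →ₐ[R] H ⊗[R] H) : H ⊗[R] H →ₗ[R] H ⊗[R] H :=
  LinearMap.mul' R (H ⊗[R] H) ∘ₗ
    TensorProduct.map Δ.toLinearMap (TensorProduct.mk R H H 1)

/-- The map `a ⊗ b ↦ Σ φ(a₂b₂) a₁ ⊗ b₁`, which for a left invariant `φ` inverts the Galois map
on the elements `(id ⊗ φ)(Δ(a)(1 ⊗ b)) ⊗ 1`. -/
def diagonalSlice (Δ : H →ₐ[R] H ⊗[R] H) (φ : H →ₗ[R] R) : H ⊗[R] H →ₗ[R] H ⊗[R] H :=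
  rightSlice (φ ∘ₗ LinearMap.mul' R H) ∘ₗ
    (TensorProduct.tensorTensorTensorComm R H H H H).toLinearMap ∘ₗ
      TensorProduct.map Δ.toLinearMap Δ.toLinearMap

variable {Δ : H →ₐ[R] H ⊗[R] H} {φ ψ ε ε' : H →ₗ[R] R}

@[simp]
theorem galoisMap_tmul (a b : H) : galoisMap Δ (a ⊗ₜ[R] b) = Δ a * (1 ⊗ₜ[R] b) := by
  simp [galoisMap]

theorem diagonalSlice_tmul (a b : H) :
    diagonalSlice Δ φ (a ⊗ₜ[R] b) = rightSlice (φ ∘ₗ LinearMap.mul' R H)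
      (TensorProduct.tensorTensorTensorComm R H H H H (Δ a ⊗ₜ[R] Δ b)) :=
  rfl

theorem galoisMap_mul_one_tmul (x : H ⊗[R] H) (b : H) :
    galoisMap Δ (x * (1 ⊗ₜ[R] b)) = galoisMap Δ x * (1 ⊗ₜ[R] b) := by
  induction x with
  | zero => simp
  | add x y hx hy => simp only [add_mul, map_add, hx, hy]
  | tmul c d => simp [mul_assoc]

theorem leftSlice_comul_mul_galoisMap (hψ : RightInvariant Δ ψ) (a : H) (x : H ⊗[R] H) :
    leftSlice ψ (Δ a * galoisMap Δ x) = leftSlice (ψ ∘ₗ LinearMap.mulLeft R a) x := by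
  induction x with
  | zero => simp
  | add x y hx hy => simp only [mul_add, map_add, hx, hy]
  | tmul c d =>
    rw [galoisMap_tmul, ← mul_assoc, ← map_mul, leftSlice_mul_one_tmul, hψ]
    simp

theorem mul'_diagonalSlice (hφ : LeftInvariant Δ φ) (x : H ⊗[R] H) :
    LinearMap.mul' R H (diagonalSlice Δ φ x) = φ (LinearMap.mul' R H x) • 1 := by
  induction x with
  | zero => simp
  | add x y hx hy => simp only [map_add, hx, hy, add_smul]
  | tmul a b =>
    rw [diagonalSlice_tmul, mul'_rightSlice_mul'_tensorTensorTensorComm, ← map_mul, hφ,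
      LinearMap.mul'_apply]

theorem galoisMap_rightSlice_mul'_tensorTensorTensorComm (x y : H ⊗[R] H) :
    galoisMap Δ (rightSlice (φ ∘ₗ LinearMap.mul' R H)
      (TensorProduct.tensorTensorTensorComm R H H H H (x ⊗ₜ[R] y))) =
    (rightSlice φ ∘ₗ LinearMap.mulRight R y).lTensor H
      (TensorProduct.assoc R H H H (Δ.toLinearMap.rTensor H x)) := by
  induction x with
  | zero => simp
  | add x x' hx hx' => simp only [TensorProduct.add_tmul, map_add, hx, hx']
  | tmul p q =>
    rw [rightSlice_mul'_tensorTensorTensorComm_tmul, galoisMap_tmul, LinearMap.rTensor_tmul,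
      AlgHom.toLinearMap_apply, lTensor_rightSlice_mulRight_assoc_tmul]

theorem lTensor_rightSlice_mulRight_comul (hφ : LeftInvariant Δ φ) (b : H) (x : H ⊗[R] H) :
    (rightSlice φ ∘ₗ LinearMap.mulRight R (Δ b)).lTensor H (Δ.toLinearMap.lTensor H x) =
      rightSlice φ (x * (1 ⊗ₜ[R] b)) ⊗ₜ[R] 1 := by
  induction x with
  | zero => simp
  | add x y hx hy => simp only [add_mul, map_add, TensorProduct.add_tmul, hx, hy]
  | tmul p q =>
    simp only [LinearMap.lTensor_tmul, LinearMap.comp_apply, LinearMap.mulRight_apply,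
      AlgHom.toLinearMap_apply, ← map_mul, hφ (q * b), Algebra.TensorProduct.tmul_mul_tmul,
      mul_one, rightSlice_tmul, TensorProduct.smul_tmul]

theorem galoisMap_diagonalSlice (hΔ : Coassociative Δ) (hφ : LeftInvariant Δ φ) (x : H ⊗[R] H) :
    galoisMap Δ (diagonalSlice Δ φ x) = rightSlice φ (galoisMap Δ x) ⊗ₜ[R] 1 := by
  induction x with
  | zero => simp
  | add x y hx hy => simp only [map_add, TensorProduct.add_tmul, hx, hy]
  | tmul a b =>
    rw [galoisMap_tmul, ← lTensor_rightSlice_mulRight_comul hφ, ← hΔ a,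
      ← galoisMap_rightSlice_mul'_tensorTensorTensorComm, diagonalSlice_tmul]

theorem galoisMap_surjective (hΔ : Coassociative Δ) (hφ : LeftInvariant Δ φ)
    (hsurj : Function.Surjective (rightSlice φ ∘ₗ galoisMap Δ)) :
    Function.Surjective (galoisMap Δ) := by
  intro z
  induction z with
  | zero => exact ⟨0, map_zero _⟩
  | add y z hy hz =>
    obtain ⟨y', rfl⟩ := hy
    obtain ⟨z', rfl⟩ := hz
    exact ⟨y' + z', map_add _ _ _⟩
  | tmul a b =>
    obtain ⟨x, rfl⟩ := hsurj a
    refine ⟨diagonalSlice Δ φ x * (1 ⊗ₜ[R] b), ?_⟩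
    rw [galoisMap_mul_one_tmul, galoisMap_diagonalSlice hΔ hφ, LinearMap.comp_apply,
      Algebra.TensorProduct.tmul_mul_tmul, mul_one, one_mul]

theorem eq_of_leftSlice_comul_of_rightSlice_comul
    (hε : ∀ a, leftSlice ε (Δ a) = a) (hε' : ∀ a, rightSlice ε' (Δ a) = a) : ε = ε' := by
  ext a
  rw [← hε' a, apply_rightSlice, hε, hε']

theorem leftSlice_comul_mul (hε : ∀ a, leftSlice ε (Δ a) = a)
    (hsurj : Function.Surjective (galoisMap Δ)) (a : H) (z : H ⊗[R] H) :
    leftSlice ε (Δ a * z) = a * leftSlice ε z := by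
  obtain ⟨x, rfl⟩ := hsurj z
  induction x with
  | zero => simp
  | add x y hx hy => simp only [map_add, mul_add, hx, hy]
  | tmul b c =>
    rw [galoisMap_tmul, ← mul_assoc, ← map_mul, leftSlice_mul_one_tmul, leftSlice_mul_one_tmul,
      hε, hε, mul_assoc]

theorem map_one_of_leftSlice_comul [FaithfulSMul R H] (hε : ∀ a, leftSlice ε (Δ a) = a) :
    ε 1 = 1 := by
  apply FaithfulSMul.algebraMap_injective R H
  rw [map_one (algebraMap R H), Algebra.algebraMap_eq_smul_one, ← leftSlice_tmul,
    ← Algebra.TensorProduct.one_def, ← map_one Δ, hε]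

theorem map_mul_of_leftSlice_comul_of_rightSlice_comul (hl : ∀ a, leftSlice ε (Δ a) = a)
    (hr : ∀ a, rightSlice ε (Δ a) = a) (hsurj : Function.Surjective (galoisMap Δ)) (a b : H) :
    ε (a * b) = ε a * ε b :=
  calc
    ε (a * b) = (ε ∘ₗ LinearMap.mulRight R b) (rightSlice ε (Δ a)) := by
      rw [hr, LinearMap.comp_apply, LinearMap.mulRight_apply]
    _ = ε (leftSlice ε (Δ a * (b ⊗ₜ[R] 1))) := by
      rw [apply_rightSlice, leftSlice_mul_tmul_one]
    _ = ε a * ε b := by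
      rw [leftSlice_comul_mul hl hsurj, leftSlice_tmul, mul_smul_comm, mul_one, map_smul,
        smul_eq_mul, mul_comm]

end Comultiplication

section Opposite

variable {R M N H : Type*} [CommSemiring R] [AddCommMonoid M] [Module R M] [AddCommMonoid N]
  [Module R N] [Semiring H] [Algebra R H]

/-- The map `m ⊗ n ↦ op n ⊗ op m`, under which left and right slices correspond. -/
def opSwap : M ⊗[R] N →ₗ[R] Nᵐᵒᵖ ⊗[R] Mᵐᵒᵖ :=
  (TensorProduct.comm R Mᵐᵒᵖ Nᵐᵒᵖ).toLinearMap ∘ₗ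
    TensorProduct.map (opLinearEquiv R).toLinearMap (opLinearEquiv R).toLinearMap

/-- The comultiplication with its tensor factors interchanged, on the opposite algebra. Passing to
it turns every statement about a comultiplication into its mirror image. -/
def opComul (Δ : H →ₐ[R] H ⊗[R] H) : Hᵐᵒᵖ →ₐ[R] Hᵐᵒᵖ ⊗[R] Hᵐᵒᵖ :=
  (Algebra.TensorProduct.comm R Hᵐᵒᵖ Hᵐᵒᵖ).toAlgHom.comp
    ((Algebra.TensorProduct.opAlgEquiv R R H H).symm.toAlgHom.comp Δ.op)

@[simp]
theorem opSwap_tmul (m : M) (n : N) : opSwap (m ⊗ₜ[R] n) = op n ⊗ₜ[R] op m := by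
  simp [opSwap]

theorem leftSlice_opSwap (ω : Nᵐᵒᵖ →ₗ[R] R) (x : M ⊗[R] N) :
    leftSlice ω (opSwap x) = op (rightSlice (ω ∘ₗ (opLinearEquiv R).toLinearMap) x) := by
  induction x with
  | zero => simp
  | add x y hx hy => simp only [map_add, op_add, hx, hy]
  | tmul m n => simp

theorem rightSlice_opSwap (ω : Mᵐᵒᵖ →ₗ[R] R) (x : M ⊗[R] N) :
    rightSlice ω (opSwap x) = op (leftSlice (ω ∘ₗ (opLinearEquiv R).toLinearMap) x) := by
  induction x with
  | zero => simp
  | add x y hx hy => simp only [map_add, op_add, hx, hy]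
  | tmul m n => simp

theorem opComul_op (Δ : H →ₐ[R] H ⊗[R] H) (a : H) : opComul Δ (op a) = opSwap (Δ a) :=
  rfl

theorem assoc_map_opSwap_comm_assoc {P : Type*} [AddCommMonoid P] [Module R P]
    (x : (M ⊗[R] N) ⊗[R] P) :
    TensorProduct.assoc R Pᵐᵒᵖ Nᵐᵒᵖ Mᵐᵒᵖ (TensorProduct.map opSwap (opLinearEquiv R).toLinearMap
      (TensorProduct.comm R M (N ⊗[R] P) (TensorProduct.assoc R M N P x))) =
    TensorProduct.map (opLinearEquiv R).toLinearMap opSwap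
      (TensorProduct.comm R (M ⊗[R] N) P x) := by
  induction x with
  | zero => simp
  | add x y hx hy => simp only [map_add, hx, hy]
  | tmul u p =>
    induction u with
    | zero => simp
    | add u v hu hv => simp only [TensorProduct.add_tmul, map_add, hu, hv]
    | tmul m n => simp

theorem rTensor_opComul_opSwap (Δ : H →ₐ[R] H ⊗[R] H) (x : H ⊗[R] H) :
    (opComul Δ).toLinearMap.rTensor Hᵐᵒᵖ (opSwap x) =
      TensorProduct.map opSwap (opLinearEquiv R).toLinearMap
        (TensorProduct.comm R H (H ⊗[R] H) (Δ.toLinearMap.lTensor H x)) := by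
  induction x with
  | zero => simp
  | add x y hx hy => simp only [map_add, hx, hy]
  | tmul a b => simp [opComul_op]

theorem lTensor_opComul_opSwap (Δ : H →ₐ[R] H ⊗[R] H) (x : H ⊗[R] H) :
    (opComul Δ).toLinearMap.lTensor Hᵐᵒᵖ (opSwap x) =
      TensorProduct.map (opLinearEquiv R).toLinearMap opSwap
        (TensorProduct.comm R (H ⊗[R] H) H (Δ.toLinearMap.rTensor H x)) := by
  induction x with
  | zero => simp
  | add x y hx hy => simp only [map_add, hx, hy]
  | tmul a b => simp [opComul_op]

variable {Δ : H →ₐ[R] H ⊗[R] H}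

theorem Coassociative.opComul (hΔ : Coassociative Δ) : Coassociative (opComul Δ) := by
  intro a
  induction a with | h a =>
  rw [opComul_op, rTensor_opComul_opSwap, ← hΔ a, assoc_map_opSwap_comm_assoc,
    lTensor_opComul_opSwap]

theorem RightInvariant.opComul {ψ : H →ₗ[R] R} (hψ : RightInvariant Δ ψ) :
    LeftInvariant (opComul Δ) (ψ ∘ₗ (opLinearEquiv R).symm.toLinearMap) := by
  intro a
  induction a with | h a =>
  rw [opComul_op, rightSlice_opSwap, LinearMap.comp_assoc, LinearEquiv.symm_comp,
    LinearMap.comp_id, hψ]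
  simp

theorem LeftInvariant.opComul {φ : H →ₗ[R] R} (hφ : LeftInvariant Δ φ) :
    RightInvariant (opComul Δ) (φ ∘ₗ (opLinearEquiv R).symm.toLinearMap) := by
  intro a
  induction a with | h a =>
  rw [opComul_op, leftSlice_opSwap, LinearMap.comp_assoc, LinearEquiv.symm_comp,
    LinearMap.comp_id, hφ]
  simp

end Opposite

section Separating

variable {R H : Type*} [CommRing R] [Ring H] [Algebra R H] {Δ : H →ₐ[R] H ⊗[R] H}
  {φ ψ ε : H →ₗ[R] R}

theorem leftSlice_comul_of_apply_rightSlice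
    (hφs : ((LinearMap.mul R H).compr₂ φ).SeparatingLeft)
    (hε : ∀ a b, ε (rightSlice φ (Δ a * (1 ⊗ₜ[R] b))) = φ (a * b)) (a : H) :
    leftSlice ε (Δ a) = a := by
  refine LinearMap.ker_eq_bot.1 (LinearMap.separatingLeft_iff_ker_eq_bot.1 hφs) ?_
  ext b
  rw [LinearMap.compr₂_apply, LinearMap.compr₂_apply, LinearMap.mul_apply', LinearMap.mul_apply',
    ← leftSlice_mul_one_tmul, ← apply_rightSlice, hε]

theorem galoisMap_injective [Module.Free R H] (hψ : RightInvariant Δ ψ)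
    (hψs : ((LinearMap.mul R H).compr₂ ψ).SeparatingRight) :
    Function.Injective (galoisMap Δ) := by
  rw [injective_iff_map_eq_zero]
  intro x hx
  refine eq_zero_of_forall_leftSlice_eq_zero (f := fun a => ψ ∘ₗ LinearMap.mulLeft R a) hψs
    fun a => ?_
  rw [← leftSlice_comul_mul_galoisMap hψ, hx, mul_zero, map_zero]

end Separating

section Counit

variable {K H : Type*} [Field K] [Ring H] [Algebra K H] {Δ : H →ₐ[K] H ⊗[K] H}
  {φ ψ ε : H →ₗ[K] K}

theorem exists_apply_rightSlice_comul_mul [Nontrivial H] (hΔ : Coassociative Δ)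
    (hφ : LeftInvariant Δ φ) (hψ : RightInvariant Δ ψ)
    (hψs : ((LinearMap.mul K H).compr₂ ψ).SeparatingRight) :
    ∃ ε : H →ₗ[K] K, ∀ a b, ε (rightSlice φ (Δ a * (1 ⊗ₜ[K] b))) = φ (a * b) := by
  have mem_dualAnnihilator : φ ∘ₗ LinearMap.mul' K H ∈
      (LinearMap.ker (rightSlice φ ∘ₗ galoisMap Δ)).dualAnnihilator := by
    rw [Submodule.mem_dualAnnihilator]
    intro x hx
    rw [LinearMap.mem_ker, LinearMap.comp_apply] at hx
    have diagonalSlice_eq : diagonalSlice Δ φ x = 0 := by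
      apply galoisMap_injective hψ hψs
      rw [galoisMap_diagonalSlice hΔ hφ, hx, TensorProduct.zero_tmul, map_zero]
    have smul_one_eq := mul'_diagonalSlice hφ x
    rw [diagonalSlice_eq, map_zero] at smul_one_eq
    exact (smul_eq_zero_iff_left one_ne_zero).1 smul_one_eq.symm
  rw [← LinearMap.range_dualMap_eq_dualAnnihilator_ker] at mem_dualAnnihilator
  obtain ⟨ε, hε⟩ := mem_dualAnnihilator
  refine ⟨ε, fun a b => ?_⟩
  simpa using LinearMap.congr_fun hε (a ⊗ₜ[K] b)

theorem exists_rightSlice_comul_eq [Nontrivial H] (hΔ : Coassociative Δ)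
    (hφ : LeftInvariant Δ φ) (hφs : ((LinearMap.mul K H).compr₂ φ).SeparatingLeft)
    (hψ : RightInvariant Δ ψ) (hψs : ((LinearMap.mul K H).compr₂ ψ).SeparatingRight) :
    ∃ ε : H →ₗ[K] K, ∀ a, rightSlice ε (Δ a) = a := by
  obtain ⟨ε, hε⟩ := exists_apply_rightSlice_comul_mul hΔ.opComul hψ.opComul hφ.opComul
    (fun a ha => unop_injective (hφs a.unop fun b => ha (op b)))
  refine ⟨ε ∘ₗ (opLinearEquiv K).toLinearMap, fun a => op_injective ?_⟩
  rw [← leftSlice_opSwap, ← opComul_op]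
  exact leftSlice_comul_of_apply_rightSlice
    (fun a ha => unop_injective (hψs a.unop fun b => ha (op b))) hε _

theorem rightSlice_comp_galoisMap_surjective
    (hφs : ((LinearMap.mul K H).compr₂ φ).SeparatingLeft) (hε : ∀ a, rightSlice ε (Δ a) = a) :
    Function.Surjective (rightSlice φ ∘ₗ galoisMap Δ) := by
  rw [← LinearMap.range_eq_top]
  by_contra hne
  obtain ⟨f, hf, hle⟩ := Submodule.exists_le_ker_of_lt_top _ (lt_top_iff_ne_top.2 hne)
  have leftSlice_eq (a : H) : leftSlice f (Δ a) = 0 := by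
    refine hφs _ fun b => ?_
    change φ (leftSlice f (Δ a) * b) = 0
    rw [← leftSlice_mul_one_tmul, ← apply_rightSlice]
    exact hle ⟨a ⊗ₜ[K] b, by simp⟩
  refine hf (LinearMap.ext fun a => ?_)
  rw [← hε a, apply_rightSlice, leftSlice_eq, map_zero, LinearMap.zero_apply]

theorem counit_exists_unique_general [Nontrivial H] (Δ : H →ₐ[K] H ⊗[K] H)
    (hΔ : Coassociative Δ) (φ : H →ₗ[K] K) (hφ : LeftInvariant Δ φ)
    (hφs : ((LinearMap.mul K H).compr₂ φ).SeparatingLeft) (ψ : H →ₗ[K] K)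
    (hψ : RightInvariant Δ ψ) (hψs : ((LinearMap.mul K H).compr₂ ψ).SeparatingRight) :
    ∃ ε : H →ₗ[K] K,
      (∀ a b : H, ε (rightSlice φ (Δ a * ((1 : H) ⊗ₜ[K] b))) = φ (a * b)) ∧
      (∀ ε' : H →ₗ[K] K,
        (∀ a b : H, ε' (rightSlice φ (Δ a * ((1 : H) ⊗ₜ[K] b))) = φ (a * b)) → ε' = ε) ∧
      (∀ a b : H, ε (a * b) = ε a * ε b) ∧ ε 1 = 1 ∧
      (∀ a : H, leftSlice ε (Δ a) = a) ∧ (∀ a : H, rightSlice ε (Δ a) = a) ∧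
      (∀ ω : H →ₗ[K] K, (∀ a : H, leftSlice ω (Δ a) = a) → ω = ε) ∧
      (∀ ω : H →ₗ[K] K, (∀ a : H, rightSlice ω (Δ a) = a) → ω = ε) := by
  obtain ⟨ε, hε⟩ := exists_apply_rightSlice_comul_mul hΔ hφ hψ hψs
  obtain ⟨ε', hr⟩ := exists_rightSlice_comul_eq hΔ hφ hφs hψ hψs
  have hl := leftSlice_comul_of_apply_rightSlice hφs hε
  obtain rfl := eq_of_leftSlice_comul_of_rightSlice_comul hl hr
  have hsurj := galoisMap_surjective hΔ hφ (rightSlice_comp_galoisMap_surjective hφs hr)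
  refine ⟨ε, hε, fun ε' hε' => ?_, map_mul_of_leftSlice_comul_of_rightSlice_comul hl hr hsurj,
    map_one_of_leftSlice_comul hl, hl, hr, fun ω hω => ?_, fun ω hω => ?_⟩
  · exact eq_of_leftSlice_comul_of_rightSlice_comul
      (leftSlice_comul_of_apply_rightSlice hφs hε') hr
  · exact eq_of_leftSlice_comul_of_rightSlice_comul hω hr
  · exact (eq_of_leftSlice_comul_of_rightSlice_comul hl hω).symm

end Counit

/-- There is a unique linear map `ε : A → ℂ` with `ε((id ⊗ φ)(Δ(a)(1 ⊗ b))) = φ(ab)`;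
it is an algebra homomorphism, it is a counit, and it is the unique functional with the
counit property on either side. -/
theorem counit_exists_unique
    (Δ : A →ₐ[ℂ] A ⊗[ℂ] A) (hΔ : IsCoassoc Δ) (hfull : IsFull Δ)
    (φ : A →ₗ[ℂ] ℂ) (hφ : IsLeftIntegral Δ φ) (hφf : IsFaithful φ)
    (ψ : A →ₗ[ℂ] ℂ) (hψ : IsRightIntegral Δ ψ) (hψf : IsFaithful ψ) :
    ∃ ε : A →ₗ[ℂ] ℂ,
      (∀ a b : A, ε (sliceR φ (Δ a * ((1 : A) ⊗ₜ[ℂ] b))) = φ (a * b)) ∧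
      (∀ ε' : A →ₗ[ℂ] ℂ,
        (∀ a b : A, ε' (sliceR φ (Δ a * ((1 : A) ⊗ₜ[ℂ] b))) = φ (a * b)) → ε' = ε) ∧
      (∀ a b : A, ε (a * b) = ε a * ε b) ∧ ε 1 = 1 ∧
      (∀ a : A, sliceL ε (Δ a) = a) ∧ (∀ a : A, sliceR ε (Δ a) = a) ∧
      (∀ ω : A →ₗ[ℂ] ℂ, (∀ a : A, sliceL ω (Δ a) = a) → ω = ε) ∧
      (∀ ω : A →ₗ[ℂ] ℂ, (∀ a : A, sliceR ω (Δ a) = a) → ω = ε) := by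
  have : Nontrivial A := not_subsingleton_iff_nontrivial.1 fun _ => hφ.1 (Subsingleton.elim φ 0)
  exact counit_exists_unique_general Δ hΔ φ hφ.2 hφf.2 ψ hψ.2 hψf.1
end
end
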